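/- Let n ≥ 2, let p > 1 with p ≠ n, and let 1 ≤ q < p. There exist constants Θ = Θ(n,p,q) ≥ 0 and C = C(n,p,q) > 0 such that for every bounded domain Ω ⊂ ℝⁿ containing the origin, every u ∈ C_c^∞(Ω \ {0}), every open ball B_r ⊂ ℝⁿ of radius r ∈ (0, diam(Ω)) whose closure contains the origin, and every D ≥ e^Θ · diam(Ω), one has r^{n/p} · X^{1/p}(r/D) · ( (1/(ω_n rⁿ)) ∫_{B_r} |u(x)|^q / |x|^q dx )^{1/q} ≤ C · ( ∫_Ω |∇u|^p dx − |(p−n)/p|^p ∫_Ω |u|^p/|x|^p dx )^{1/p}, where u is extended by zero outside Ω. -/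

import Mathlib

open MeasureTheory Metric Set

/-!
Integrating the divergence of `x ↦ |u|^p |x|^{-p} x` turns the Hardy deficit into the integral of a
density bounded below by `|x|^{-p}` times the Bregman divergence of `|·|^p` between
`((p - n) / p) u` and `∂u · x`. That divergence controls `|∂u · x - ((p - n) / p) u|`, which is the
flux produced when `|u|^p |x|^{-p} x` is multiplied by a further radial weight `g(|x|)`, so the
deficit also pays for the term `|u|^p |x|^{-p} · |x| g'(|x|)` up to the factor `sup g² / (t g')`.
Taking `g` comparable to `(|x| / r)^β` for `|x| ≤ r` and logarithmic up to scale `D` makes this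
factor `1 + log (D / r)`, and Hölder's inequality against the locally integrable power
`(|x| / r)^{-β q / (p - q)}` gives the local bound.
-/

open Module (finrank)

/-! ## The Bregman divergence of a power of the absolute value -/

section Bregman

variable {p : ℝ}

lemma abs_rpow_sub_two_mul_mul_self (hp : p ≠ 0) (a : ℝ) : |a| ^ (p - 2) * a * a = |a| ^ p := by
  rcases eq_or_ne a 0 with rfl | ha
  · simp [hp]
  · rw [mul_assoc, ← abs_mul_abs_self, ← mul_assoc, ← Real.rpow_add_one (abs_ne_zero.2 ha),
      ← Real.rpow_add_one (abs_ne_zero.2 ha)]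
    ring_nf

lemma abs_rpow_sub_two_mul_abs (hp : p ≠ 1) (a : ℝ) : |a| ^ (p - 2) * |a| = |a| ^ (p - 1) := by
  rcases eq_or_ne a 0 with rfl | ha
  · simp [sub_ne_zero.2 hp]
  · rw [← Real.rpow_add_one (abs_ne_zero.2 ha)]
    ring_nf

/-- The Bregman divergence of `|·| ^ p`: the gap at `b` between `|b| ^ p` and the tangent line to
`|·| ^ p` at `a`. The derivative of `|·| ^ p` is written `p |a| ^ (p - 2) a`. -/
noncomputable def absRpowBregman (p a b : ℝ) : ℝ :=
  |b| ^ p - |a| ^ p - p * (|a| ^ (p - 2) * a) * (b - a)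

lemma absRpowBregman_one_one_add (t : ℝ) :
    absRpowBregman p 1 (1 + t) = |1 + t| ^ p - 1 - p * t := by
  simp [absRpowBregman]

lemma absRpowBregman_mul_mul (hp : p ≠ 0) (c a b : ℝ) :
    absRpowBregman p (c * a) (c * b) = |c| ^ p * absRpowBregman p a b := by
  simp only [absRpowBregman, abs_mul, Real.mul_rpow (abs_nonneg _) (abs_nonneg _)]
  linear_combination (-p * |a| ^ (p - 2) * a * (b - a)) * abs_rpow_sub_two_mul_mul_self hp c

lemma absRpowBregman_eq_rpow_mul (hp : p ≠ 0) {a : ℝ} (ha : a ≠ 0) (b : ℝ) :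
    absRpowBregman p a b = |a| ^ p * absRpowBregman p 1 (1 + (b - a) / a) := by
  rw [← absRpowBregman_mul_mul hp, mul_one]
  congr 1
  field_simp
  ring

lemma sq_div_le_absRpowBregman_of_le_two (hp : 1 < p) (hp2 : p ≤ 2) (t : ℝ) :
    (p - 1) ^ 2 * t ^ 2 / (1 + |t|) ≤ absRpowBregman p 1 (1 + t) := by
  rw [absRpowBregman_one_one_add]
  rcases lt_or_ge (-1) t with ht | ht
  · have hpos : 0 < 1 + t := by linarith
    have hden : 0 < 1 + (2 - p) * t := by nlinarith
    have bernoulli : (1 + t) ^ (2 - p) ≤ 1 + (2 - p) * t :=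
      rpow_one_add_le_one_add_mul_self ht.le (by linarith) (by linarith)
    have hsq : (1 + t) ^ 2 ≤ (1 + (2 - p) * t) * (1 + t) ^ p := by
      calc (1 + t) ^ 2 = (1 + t) ^ (2 - p) * (1 + t) ^ p := by
            rw [← Real.rpow_add hpos, ← Real.rpow_natCast]
            norm_num
        _ ≤ (1 + (2 - p) * t) * (1 + t) ^ p := by gcongr
    calc (p - 1) ^ 2 * t ^ 2 / (1 + |t|) ≤ (p - 1) ^ 2 * t ^ 2 / (1 + (2 - p) * t) := by
          refine div_le_div_of_nonneg_left (by positivity) hden ?_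
          nlinarith [le_abs_self t, abs_nonneg t]
      _ ≤ |1 + t| ^ p - 1 - p * t := by
          rw [div_le_iff₀ hden, abs_of_pos hpos]
          nlinarith
  · have hpow : 0 ≤ |1 + t| ^ p := by positivity
    rw [abs_of_neg (by linarith : t < 0), div_le_iff₀ (by linarith)]
    calc (p - 1) ^ 2 * t ^ 2 ≤ (p - 1) * t ^ 2 := by
          gcongr
          nlinarith
      _ ≤ (p - 1) * (-t) * (1 + -t) := by nlinarith
      _ ≤ (|1 + t| ^ p - 1 - p * t) * (1 + -t) := by
          gcongr
          · linarith
          · linarith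

lemma sq_le_absRpowBregman_of_two_le (hp : 2 ≤ p) (t : ℝ) :
    t ^ 2 ≤ absRpowBregman p 1 (1 + t) := by
  have hsq : (1 + (2 * t + t ^ 2)) ^ (p / 2) = |1 + t| ^ p := by
    rw [show 1 + (2 * t + t ^ 2) = (1 + t) ^ 2 by ring, ← sq_abs, ← Real.rpow_natCast,
      ← Real.rpow_mul (abs_nonneg _)]
    congr 1
    push_cast
    ring
  have bernoulli := one_add_mul_self_le_rpow_one_add (s := 2 * t + t ^ 2) (p := p / 2)
    (by nlinarith [sq_nonneg (t + 1)]) (by linarith)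
  rw [hsq] at bernoulli
  rw [absRpowBregman_one_one_add]
  nlinarith [sq_nonneg t]

lemma exists_mul_sq_div_le_absRpowBregman (hp : 1 < p) :
    ∃ κ : ℝ, 0 < κ ∧ ∀ t : ℝ, κ * t ^ 2 / (1 + |t|) ≤ absRpowBregman p 1 (1 + t) := by
  rcases le_total p 2 with hp2 | hp2
  · exact ⟨(p - 1) ^ 2, pow_pos (sub_pos.2 hp) 2, sq_div_le_absRpowBregman_of_le_two hp hp2⟩
  · refine ⟨1, one_pos, fun t => le_trans ?_ (sq_le_absRpowBregman_of_two_le hp2 t)⟩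
    rw [one_mul]
    exact div_le_self (sq_nonneg t) (by linarith [abs_nonneg t])

lemma absRpowBregman_nonneg (hp : 1 < p) (a b : ℝ) : 0 ≤ absRpowBregman p a b := by
  have hp0 : p ≠ 0 := by positivity
  rcases eq_or_ne a 0 with rfl | ha
  · simpa [absRpowBregman, hp0] using Real.rpow_nonneg (abs_nonneg b) p
  · obtain ⟨κ, hκ, hle⟩ := exists_mul_sq_div_le_absRpowBregman hp
    rw [absRpowBregman_eq_rpow_mul hp0 ha]
    exact mul_nonneg (by positivity) (le_trans (by positivity) (hle _))

lemma exists_abs_le_add_mul_absRpowBregman (hp : 1 < p) :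
    ∃ K : ℝ, 0 < K ∧ ∀ t ε : ℝ, 0 < ε → ε ≤ 1 →
      |t| ≤ ε + K / ε * absRpowBregman p 1 (1 + t) := by
  obtain ⟨κ, hκ, hle⟩ := exists_mul_sq_div_le_absRpowBregman hp
  refine ⟨2 / κ, by positivity, fun t ε hε hε1 => ?_⟩
  have hnonneg := absRpowBregman_nonneg hp 1 (1 + t)
  rcases le_total |t| ε with h | h
  · exact h.trans (le_add_of_nonneg_right (by positivity))
  · have hlin : κ * ε * |t| / 2 ≤ κ * t ^ 2 / (1 + |t|) := by
      rw [div_le_div_iff₀ two_pos (by positivity), ← sq_abs t]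
      have : ε * (1 + |t|) ≤ 2 * |t| := by nlinarith [abs_nonneg t]
      nlinarith [mul_nonneg hκ.le (abs_nonneg t)]
    calc |t| = 2 / κ / ε * (κ * ε * |t| / 2) := by field_simp
      _ ≤ 2 / κ / ε * absRpowBregman p 1 (1 + t) := by
          gcongr
          exact hlin.trans (hle t)
      _ ≤ ε + 2 / κ / ε * absRpowBregman p 1 (1 + t) := le_add_of_nonneg_left hε.le

lemma exists_rpow_mul_abs_sub_le_absRpowBregman (hp : 1 < p) :
    ∃ K : ℝ, 0 < K ∧ ∀ a b ε : ℝ, 0 < ε → ε ≤ 1 →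
      |a| ^ (p - 1) * |b - a| ≤ ε * |a| ^ p + K / ε * absRpowBregman p a b := by
  obtain ⟨K, hK, hle⟩ := exists_abs_le_add_mul_absRpowBregman hp
  refine ⟨K, hK, fun a b ε hε hε1 => ?_⟩
  have hp0 : p ≠ 0 := by positivity
  have hnonneg := absRpowBregman_nonneg hp a b
  rcases eq_or_ne a 0 with rfl | ha
  · rw [abs_zero, Real.zero_rpow (sub_ne_zero.2 hp.ne'), zero_mul]
    positivity
  · have ha' : |a| ≠ 0 := abs_ne_zero.2 ha
    calc |a| ^ (p - 1) * |b - a| = |a| ^ p * |(b - a) / a| := by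
          rw [Real.rpow_sub_one ha', abs_div]
          field_simp
      _ ≤ |a| ^ p * (ε + K / ε * absRpowBregman p 1 (1 + (b - a) / a)) := by
          gcongr
          exact hle _ ε hε hε1
      _ = ε * |a| ^ p + K / ε * absRpowBregman p a b := by
          rw [absRpowBregman_eq_rpow_mul hp0 ha]
          ring

end Bregman

/-! ## Integration by parts against the Euler field -/

section EulerDiv

variable {E : Type*} [NormedAddCommGroup E] [NormedSpace ℝ E]

/-- The divergence of the vector field `x ↦ f x • x`, expanded as `n f + ∂f · x` where `n` is the
dimension of `E`. -/
noncomputable def eulerDiv (f : E → ℝ) (x : E) : ℝ :=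
  finrank ℝ E * f x + fderiv ℝ f x x

lemma eulerDiv_of_notMem_tsupport {f : E → ℝ} {x : E} (hx : x ∉ tsupport f) :
    eulerDiv f x = 0 := by
  simp [eulerDiv, image_eq_zero_of_notMem_tsupport hx,
    image_eq_zero_of_notMem_tsupport fun h => hx (tsupport_fderiv_subset ℝ h)]

lemma eulerDiv_mul_comp_norm {f : E → ℝ} {g : ℝ → ℝ} {x : E}
    (hnorm : DifferentiableAt ℝ (‖·‖) x) (hf : DifferentiableAt ℝ f x)
    (hg : DifferentiableAt ℝ g ‖x‖) :
    eulerDiv (fun y => f y * g ‖y‖) x =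
      g ‖x‖ * eulerDiv f x + f x * (‖x‖ * deriv g ‖x‖) := by
  have hgnorm := hg.hasDerivAt.comp_hasFDerivAt x hnorm.hasFDerivAt
  have hfderiv : fderiv ℝ (fun y => f y * g ‖y‖) x = _ := (hf.hasFDerivAt.mul hgnorm).fderiv
  simp only [eulerDiv, hfderiv, add_apply, smul_apply,
    hnorm.fderiv_norm_self, smul_eq_mul, Function.comp_apply]
  ring

variable [MeasurableSpace E] [BorelSpace E]
  {μ : Measure E} [μ.IsAddHaarMeasure]

lemma integrable_fderiv_self {f : E → ℝ} (hf : ContDiff ℝ 1 f) (hc : HasCompactSupport f) :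
    Integrable (fun x => fderiv ℝ f x x) μ :=
  ((hf.continuous_fderiv one_ne_zero).clm_apply continuous_id).integrable_of_hasCompactSupport <|
    (hc.fderiv ℝ).mono fun x hx h => hx <| by simp [h]

lemma integrable_eulerDiv {f : E → ℝ} (hf : ContDiff ℝ 1 f) (hc : HasCompactSupport f) :
    Integrable (eulerDiv f) μ :=
  ((hf.continuous.integrable_of_hasCompactSupport hc).const_mul _).add
    (integrable_fderiv_self hf hc)

variable [FiniteDimensional ℝ E]

lemma integral_fderiv_self {f : E → ℝ} (hf : ContDiff ℝ 1 f) (hc : HasCompactSupport f) :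
    ∫ x, fderiv ℝ f x x ∂μ = -(finrank ℝ E * ∫ x, f x ∂μ) := by
  let b := Module.finBasis ℝ E
  let coord i : E →L[ℝ] ℝ := (b.coord i).toContinuousLinearMap
  have hf_int : Integrable f μ := hf.continuous.integrable_of_hasCompactSupport hc
  have : Continuous (fderiv ℝ f) := hf.continuous_fderiv one_ne_zero
  have hcoord_fderiv_int i : Integrable (fun x => coord i x * fderiv ℝ f x (b i)) μ := by
    refine Continuous.integrable_of_hasCompactSupport (by fun_prop) ?_
    exact (hc.fderiv_apply ℝ (b i)).mul_left
  have hcoord_int i : Integrable (fun x => coord i x * f x) μ :=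
    ((coord i).continuous.mul hf.continuous).integrable_of_hasCompactSupport hc.mul_left
  have hcoord i x : fderiv ℝ (coord i) x (b i) = 1 := by
    rw [(coord i).fderiv]
    simp [coord]
  have hparts i : ∫ x, coord i x * fderiv ℝ f x (b i) ∂μ = -∫ x, f x ∂μ := by
    rw [integral_mul_fderiv_eq_neg_fderiv_mul_of_integrable (by simpa only [hcoord, one_mul])
      (hcoord_fderiv_int i) (hcoord_int i) (fun x _ => (coord i).differentiableAt)
      (fun x _ => hf.differentiable one_ne_zero x)]
    simp only [hcoord, one_mul]
  have hexpand x : fderiv ℝ f x x = ∑ i, coord i x * fderiv ℝ f x (b i) := by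
    calc fderiv ℝ f x x = fderiv ℝ f x (∑ i, b.repr x i • b i) := by rw [b.sum_repr]
      _ = ∑ i, coord i x * fderiv ℝ f x (b i) := by
          simp only [map_sum, map_smul, smul_eq_mul]
          rfl
  simp only [hexpand]
  rw [integral_finsetSum _ fun i _ => hcoord_fderiv_int i]
  simp [hparts]

lemma integral_eulerDiv {f : E → ℝ} (hf : ContDiff ℝ 1 f) (hc : HasCompactSupport f) :
    ∫ x, eulerDiv f x ∂μ = 0 := by
  have hf_int : Integrable f μ := hf.continuous.integrable_of_hasCompactSupport hc
  simp only [eulerDiv]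
  rw [integral_add (hf_int.const_mul _) (integrable_fderiv_self hf hc), integral_const_mul,
    integral_fderiv_self hf hc, add_neg_cancel]

end EulerDiv

/-! ## The Hardy density and its deficit -/

section HardyDensity

variable {E : Type*} [NormedAddCommGroup E]

/-- The density `|u x| ^ p / ‖x‖ ^ p` on the smaller side of Hardy's inequality. -/
noncomputable def hardyDensity (p : ℝ) (u : E → ℝ) (x : E) : ℝ :=
  |u x| ^ p / ‖x‖ ^ p

variable {p : ℝ} {u : E → ℝ} {x : E}

lemma hardyDensity_nonneg : 0 ≤ hardyDensity p u x := by
  unfold hardyDensity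
  positivity

lemma hardyDensity_of_notMem_tsupport (hp : p ≠ 0) (hx : x ∉ tsupport u) :
    hardyDensity p u x = 0 := by
  simp [hardyDensity, image_eq_zero_of_notMem_tsupport hx, hp]

lemma tsupport_hardyDensity_subset (hp : p ≠ 0) : tsupport (hardyDensity p u) ⊆ tsupport u :=
  closure_mono fun x hx hux => hx (by simp [hardyDensity, hux, hp])

lemma hasCompactSupport_hardyDensity (hp : p ≠ 0) (hc : HasCompactSupport u) :
    HasCompactSupport (hardyDensity p u) :=
  hc.mono' (subset_tsupport _ |>.trans (tsupport_hardyDensity_subset hp))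

variable [InnerProductSpace ℝ E]

lemma contDiff_hardyDensity_mul_comp_norm (hp : 1 < p) (hu : ContDiff ℝ 1 u)
    (h0 : (0 : E) ∉ tsupport u) {g : ℝ → ℝ} (hg : ∀ x ∈ tsupport u, ContDiffAt ℝ 1 g ‖x‖) :
    ContDiff ℝ 1 (fun x => hardyDensity p u x * g ‖x‖) := by
  have hp0 : p ≠ 0 := by positivity
  refine contMDiff_iff_contDiff.1 (contMDiff_of_tsupport fun x hx => ?_)
  have hxu : x ∈ tsupport u :=
    tsupport_hardyDensity_subset hp0 (tsupport_mul_subset_left hx)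
  have hx0 : x ≠ 0 := ne_of_mem_of_not_mem hxu h0
  have hx0' : ‖x‖ ≠ 0 := norm_ne_zero_iff.2 hx0
  have hnorm : ContDiffAt ℝ 1 (fun y : E => ‖y‖) x := contDiffAt_norm ℝ hx0
  have hpow : ContDiff ℝ 1 fun y => |u y| ^ p := (contDiff_norm_rpow hp).comp hu
  exact ((hpow.contDiffAt.div (hnorm.rpow_const_of_ne hx0') (by positivity)).mul
    ((hg x hxu).comp x hnorm)).contMDiffAt

lemma contDiff_hardyDensity (hp : 1 < p) (hu : ContDiff ℝ 1 u) (h0 : (0 : E) ∉ tsupport u) :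
    ContDiff ℝ 1 (hardyDensity p u) := by
  simpa using contDiff_hardyDensity_mul_comp_norm hp hu h0 (g := fun _ => 1)
    fun _ _ => contDiffAt_const

/-- The coefficient `(p - n) / p` whose absolute value to the power `p` is the best constant in
Hardy's inequality, `n` being the dimension of `E`. -/
noncomputable def hardyCoeff (E : Type*) [AddCommGroup E] [Module ℝ E] (p : ℝ) : ℝ :=
  (p - finrank ℝ E) / p

lemma eulerDiv_hardyDensity (hp : 1 < p) (hx : x ≠ 0) (hu : DifferentiableAt ℝ u x) :
    eulerDiv (hardyDensity p u) x =
      p * (|u x| ^ (p - 2) * u x) * (fderiv ℝ u x x - hardyCoeff E p * u x) / ‖x‖ ^ p := by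
  have hp0 : p ≠ 0 := by positivity
  have hx0 : ‖x‖ ≠ 0 := norm_ne_zero_iff.2 hx
  have hnorm : DifferentiableAt ℝ (fun y : E => ‖y‖) x :=
    (contDiffAt_norm ℝ hx (n := 1)).differentiableAt one_ne_zero
  have hnum : HasFDerivAt (fun y => |u y| ^ p) ((p * |u x| ^ (p - 2) * u x) • fderiv ℝ u x) x :=
    (hasDerivAt_abs_rpow (u x) hp).comp_hasFDerivAt x hu.hasFDerivAt
  have hden : HasDerivAt (fun t : ℝ => (t ^ p)⁻¹) (-(p * ‖x‖ ^ (p - 1)) / (‖x‖ ^ p) ^ 2) ‖x‖ :=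
    (Real.hasDerivAt_rpow_const (Or.inl hx0)).inv (by positivity)
  have hcoeff : p * hardyCoeff E p = p - finrank ℝ E := mul_div_cancel₀ _ hp0
  change eulerDiv (fun y => |u y| ^ p * (‖y‖ ^ p)⁻¹) x = _
  rw [eulerDiv_mul_comp_norm hnorm hnum.differentiableAt hden.differentiableAt, hden.deriv,
    eulerDiv, hnum.fderiv, Real.rpow_sub_one hx0, ← abs_rpow_sub_two_mul_mul_self hp0]
  simp only [smul_apply, smul_eq_mul]
  field_simp
  linear_combination |u x| ^ (p - 2) * u x ^ 2 * hcoeff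

/-- The integrand of the deficit in Hardy's inequality, corrected by a multiple of a divergence that
makes it pointwise nonnegative. -/
noncomputable def hardyDeficitDensity (p : ℝ) (u : E → ℝ) (x : E) : ℝ :=
  ‖fderiv ℝ u x‖ ^ p - |hardyCoeff E p| ^ p * hardyDensity p u x -
    |hardyCoeff E p| ^ (p - 2) * hardyCoeff E p * eulerDiv (hardyDensity p u) x

lemma hardyDeficitDensity_of_notMem_tsupport (hp : p ≠ 0) (hx : x ∉ tsupport u) :
    hardyDeficitDensity p u x = 0 := by
  have hdensity : x ∉ tsupport (hardyDensity p u) := fun h => hx (tsupport_hardyDensity_subset hp h)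
  have hfderiv : fderiv ℝ u x = 0 :=
    image_eq_zero_of_notMem_tsupport fun h => hx (tsupport_fderiv_subset ℝ h)
  simp [hardyDeficitDensity, hfderiv, hp, hardyDensity_of_notMem_tsupport hp hx,
    eulerDiv_of_notMem_tsupport hdensity]

lemma absRpowBregman_div_le_hardyDeficitDensity (hp : 1 < p) (hx : x ≠ 0)
    (hu : DifferentiableAt ℝ u x) :
    absRpowBregman p (hardyCoeff E p * u x) (fderiv ℝ u x x) / ‖x‖ ^ p ≤
      hardyDeficitDensity p u x := by
  have hgrad : |fderiv ℝ u x x| ^ p / ‖x‖ ^ p ≤ ‖fderiv ℝ u x‖ ^ p := by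
    rw [div_le_iff₀ (by positivity), ← Real.mul_rpow (norm_nonneg _) (norm_nonneg _)]
    exact Real.rpow_le_rpow (abs_nonneg _) ((fderiv ℝ u x).le_opNorm x) (by positivity)
  calc absRpowBregman p (hardyCoeff E p * u x) (fderiv ℝ u x x) / ‖x‖ ^ p
      = |fderiv ℝ u x x| ^ p / ‖x‖ ^ p - |hardyCoeff E p| ^ p * hardyDensity p u x -
          |hardyCoeff E p| ^ (p - 2) * hardyCoeff E p * eulerDiv (hardyDensity p u) x := by
        rw [eulerDiv_hardyDensity hp hx hu]
        simp only [absRpowBregman, hardyDensity, abs_mul,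
          Real.mul_rpow (abs_nonneg _) (abs_nonneg _)]
        ring
    _ ≤ hardyDeficitDensity p u x := by
        unfold hardyDeficitDensity
        gcongr

lemma hardyDeficitDensity_nonneg (hp : 1 < p) (hx : x ≠ 0) (hu : DifferentiableAt ℝ u x) :
    0 ≤ hardyDeficitDensity p u x :=
  (div_nonneg (absRpowBregman_nonneg hp _ _) (by positivity)).trans
    (absRpowBregman_div_le_hardyDeficitDensity hp hx hu)

lemma hardyCoeff_ne_zero (hp : 1 < p) (hpn : p ≠ finrank ℝ E) : hardyCoeff E p ≠ 0 :=
  div_ne_zero (sub_ne_zero.2 hpn) (by positivity)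

lemma abs_eulerDiv_hardyDensity (hp : 1 < p) (hpn : p ≠ finrank ℝ E) (hx : x ≠ 0)
    (hu : DifferentiableAt ℝ u x) :
    |eulerDiv (hardyDensity p u) x| = p / |hardyCoeff E p| ^ (p - 1) *
      (|hardyCoeff E p * u x| ^ (p - 1) * |fderiv ℝ u x x - hardyCoeff E p * u x|) / ‖x‖ ^ p := by
  have hcoeff := hardyCoeff_ne_zero hp hpn
  rw [eulerDiv_hardyDensity hp hx hu, abs_div, abs_mul, abs_mul p, abs_mul (|u x| ^ (p - 2)),
    abs_of_nonneg (by positivity : 0 ≤ |u x| ^ (p - 2)), abs_rpow_sub_two_mul_abs hp.ne',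
    abs_of_pos (by positivity : 0 < p), abs_of_nonneg (by positivity : 0 ≤ ‖x‖ ^ p),
    abs_mul (hardyCoeff E p) (u x), Real.mul_rpow (abs_nonneg _) (abs_nonneg _)]
  field_simp

lemma exists_abs_eulerDiv_hardyDensity_le (hp : 1 < p) (hpn : p ≠ finrank ℝ E) :
    ∃ K : ℝ, 0 < K ∧ ∀ {u : E → ℝ} {x : E} {ε : ℝ}, x ≠ 0 → DifferentiableAt ℝ u x →
      0 < ε → ε ≤ 1 →
      |eulerDiv (hardyDensity p u) x| ≤
        ε * hardyDensity p u x + K / ε * hardyDeficitDensity p u x := by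
  obtain ⟨K, hK, hbregman⟩ := exists_rpow_mul_abs_sub_le_absRpowBregman hp
  set κ := hardyCoeff E p
  have hκ0 : 0 < |κ| := abs_pos.2 (hardyCoeff_ne_zero hp hpn)
  set δ := (1 + p * |κ|)⁻¹ with hδ
  have hδ0 : 0 < δ := by positivity
  have hδ1 : δ ≤ 1 := inv_le_one_of_one_le₀ (le_add_of_nonneg_right (by positivity))
  have hδκ : p * |κ| * δ ≤ 1 := by
    rw [hδ, mul_inv_le_iff₀ (by positivity), one_mul]
    exact le_add_of_nonneg_left zero_le_one
  refine ⟨p * K / (|κ| ^ (p - 1) * δ), by positivity, fun {u x ε} hx hu hε hε1 => ?_⟩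
  have hdensity : 0 ≤ hardyDensity p u x := hardyDensity_nonneg
  have hκp : |κ| ^ p = |κ| ^ (p - 1) * |κ| := by
    rw [← Real.rpow_add_one hκ0.ne', sub_add_cancel]
  calc |eulerDiv (hardyDensity p u) x|
      = p / |κ| ^ (p - 1) * (|κ * u x| ^ (p - 1) * |fderiv ℝ u x x - κ * u x|) / ‖x‖ ^ p :=
        abs_eulerDiv_hardyDensity hp hpn hx hu
    _ ≤ p / |κ| ^ (p - 1) * (δ * ε * |κ * u x| ^ p +
          K / (δ * ε) * absRpowBregman p (κ * u x) (fderiv ℝ u x x)) / ‖x‖ ^ p := by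
        gcongr
        exact hbregman _ _ _ (by positivity) (mul_le_one₀ hδ1 hε.le hε1)
    _ = p * |κ| * δ * (ε * hardyDensity p u x) + p * K / (|κ| ^ (p - 1) * δ) / ε *
          (absRpowBregman p (κ * u x) (fderiv ℝ u x x) / ‖x‖ ^ p) := by
        rw [abs_mul, Real.mul_rpow (abs_nonneg _) (abs_nonneg _), hκp, hardyDensity]
        field_simp
    _ ≤ 1 * (ε * hardyDensity p u x) + p * K / (|κ| ^ (p - 1) * δ) / ε *
          hardyDeficitDensity p u x := by
        gcongr
        exact absRpowBregman_div_le_hardyDeficitDensity hp hx hu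
    _ = ε * hardyDensity p u x + p * K / (|κ| ^ (p - 1) * δ) / ε *
          hardyDeficitDensity p u x := by rw [one_mul]

end HardyDensity

/-! ## The weighted Hardy inequality with remainder -/

section WeightedHardy

/-- The conditions at `t` under which the radial weight `t * deriv g t` can be added to Hardy's
inequality at the cost of a factor `N` in the deficit. -/
structure IsHardyWeightAt (g : ℝ → ℝ) (N t : ℝ) : Prop where
  contDiffAt : ContDiffAt ℝ 1 g t
  pos : 0 < g t
  deriv_pos : 0 < t * deriv g t
  deriv_le : t * deriv g t ≤ g t
  sq_le : g t ^ 2 ≤ N * (t * deriv g t)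

variable {E : Type*} [NormedAddCommGroup E] {p : ℝ}

lemma hardyDensity_mul_deriv_nonneg (hp : p ≠ 0) {u : E → ℝ} {g : ℝ → ℝ} {N : ℝ} {x : E}
    (hg : x ∈ tsupport u → IsHardyWeightAt g N ‖x‖) :
    0 ≤ hardyDensity p u x * (‖x‖ * deriv g ‖x‖) := by
  by_cases hx : x ∈ tsupport u
  · exact mul_nonneg hardyDensity_nonneg (hg hx).deriv_pos.le
  · rw [hardyDensity_of_notMem_tsupport hp hx, zero_mul]

variable [InnerProductSpace ℝ E]

lemma exists_hardyDensity_mul_deriv_le (hp : 1 < p) (hpn : p ≠ finrank ℝ E) :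
    ∃ K : ℝ, 0 < K ∧ ∀ {u : E → ℝ} {x : E} {g : ℝ → ℝ} {N : ℝ}, x ≠ 0 → ContDiff ℝ 1 u →
      (0 : E) ∉ tsupport u → IsHardyWeightAt g N ‖x‖ →
      hardyDensity p u x * (‖x‖ * deriv g ‖x‖) ≤
        2 * eulerDiv (fun y => hardyDensity p u y * g ‖y‖) x +
          K * N * hardyDeficitDensity p u x := by
  obtain ⟨K, hK, hle⟩ := exists_abs_eulerDiv_hardyDensity_le hp hpn
  refine ⟨4 * K, by positivity, fun {u x g N} hx hu h0 hg => ?_⟩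
  have hux : DifferentiableAt ℝ u x := hu.differentiable one_ne_zero x
  have hdeficit := hardyDeficitDensity_nonneg hp hx hux
  have hproduct := eulerDiv_mul_comp_norm
    ((contDiffAt_norm ℝ hx (n := 1)).differentiableAt one_ne_zero)
    ((contDiff_hardyDensity hp hu h0).differentiable one_ne_zero x)
    (hg.contDiffAt.differentiableAt one_ne_zero)
  set w := ‖x‖ * deriv g ‖x‖
  set γ := g ‖x‖
  have hγ : 0 < γ := hg.pos
  have hw : 0 < w := hg.deriv_pos
  have hε1 : w / (2 * γ) ≤ 1 := by
    rw [div_le_one (by positivity)]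
    linarith [hg.deriv_le]
  have hflux : -(γ * eulerDiv (hardyDensity p u) x) ≤
      hardyDensity p u x * w / 2 + 2 * K * N * hardyDeficitDensity p u x := by
    calc -(γ * eulerDiv (hardyDensity p u) x) ≤ γ * |eulerDiv (hardyDensity p u) x| := by
          rw [← mul_neg]
          gcongr
          exact neg_le_abs _
      _ ≤ γ * (w / (2 * γ) * hardyDensity p u x +
            K / (w / (2 * γ)) * hardyDeficitDensity p u x) := by
          gcongr
          exact hle hx hux (by positivity) hε1
      _ = hardyDensity p u x * w / 2 + 2 * K * (γ ^ 2 / w) * hardyDeficitDensity p u x := by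
          field_simp
      _ ≤ hardyDensity p u x * w / 2 + 2 * K * N * hardyDeficitDensity p u x := by
          gcongr
          exact (div_le_iff₀ hw).2 hg.sq_le
  linarith

variable [MeasurableSpace E]

/-- The difference of the two sides of Hardy's inequality with its sharp constant. -/
noncomputable def hardyDeficit (μ : Measure E) (p : ℝ) (u : E → ℝ) : ℝ :=
  (∫ x, ‖fderiv ℝ u x‖ ^ p ∂μ) - |hardyCoeff E p| ^ p * ∫ x, hardyDensity p u x ∂μ

lemma hardyDeficit_eq_setIntegral (μ : Measure E) (hp : p ≠ 0) {u : E → ℝ} {Ω : Set E}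
    (hΩ : tsupport u ⊆ Ω) :
    hardyDeficit μ p u = (∫ x in Ω, ‖fderiv ℝ u x‖ ^ p ∂μ) -
      |(p - finrank ℝ E) / p| ^ p * ∫ x in Ω, |u x| ^ p / ‖x‖ ^ p ∂μ := by
  have hu {x : E} (hx : x ∉ Ω) : u x = 0 := image_eq_zero_of_notMem_tsupport fun h => hx (hΩ h)
  have hfderiv {x : E} (hx : x ∉ Ω) : fderiv ℝ u x = 0 :=
    image_eq_zero_of_notMem_tsupport fun h => hx (hΩ (tsupport_fderiv_subset ℝ h))
  rw [setIntegral_eq_integral_of_forall_compl_eq_zero fun x hx => by simp [hfderiv hx, hp],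
    setIntegral_eq_integral_of_forall_compl_eq_zero fun x hx => by simp [hu hx, hp]]
  rfl

variable [BorelSpace E] {μ : Measure E} [μ.IsAddHaarMeasure] {u : E → ℝ}

lemma integrable_norm_fderiv_rpow (hp : 0 < p) (hu : ContDiff ℝ 1 u) (hc : HasCompactSupport u) :
    Integrable (fun x => ‖fderiv ℝ u x‖ ^ p) μ := by
  refine Continuous.integrable_of_hasCompactSupport
    ((hu.continuous_fderiv one_ne_zero).norm.rpow_const fun _ => Or.inr hp.le) ?_
  exact (hc.fderiv ℝ).mono fun x hx h => hx (by simp [h, hp.ne'])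

lemma integrable_hardyDensity (hp : 1 < p) (hu : ContDiff ℝ 1 u) (hc : HasCompactSupport u)
    (h0 : (0 : E) ∉ tsupport u) : Integrable (hardyDensity p u) μ :=
  (contDiff_hardyDensity hp hu h0).continuous.integrable_of_hasCompactSupport
    (hasCompactSupport_hardyDensity (by positivity) hc)

lemma integrable_hardyDeficitDensity (hp : 1 < p) (hu : ContDiff ℝ 1 u)
    (hc : HasCompactSupport u) (h0 : (0 : E) ∉ tsupport u) :
    Integrable (hardyDeficitDensity p u) μ :=
  ((integrable_norm_fderiv_rpow (by positivity) hu hc).sub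
    ((integrable_hardyDensity hp hu hc h0).const_mul _)).sub <|
    (integrable_eulerDiv (contDiff_hardyDensity hp hu h0)
      (hasCompactSupport_hardyDensity (by positivity) hc)).const_mul _

variable [FiniteDimensional ℝ E]

lemma integral_hardyDeficitDensity (hp : 1 < p) (hu : ContDiff ℝ 1 u)
    (hc : HasCompactSupport u) (h0 : (0 : E) ∉ tsupport u) :
    ∫ x, hardyDeficitDensity p u x ∂μ = hardyDeficit μ p u := by
  have hgrad : Integrable (fun x => ‖fderiv ℝ u x‖ ^ p) μ :=
    integrable_norm_fderiv_rpow (by positivity) hu hc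
  have hdensity : Integrable (fun x => |hardyCoeff E p| ^ p * hardyDensity p u x) μ :=
    (integrable_hardyDensity hp hu hc h0).const_mul _
  have hsub : Integrable
      (fun x => ‖fderiv ℝ u x‖ ^ p - |hardyCoeff E p| ^ p * hardyDensity p u x) μ :=
    hgrad.sub hdensity
  have hC1 := contDiff_hardyDensity hp hu h0
  have hcompact := hasCompactSupport_hardyDensity (by positivity : p ≠ 0) hc
  simp only [hardyDeficitDensity]
  rw [integral_sub hsub ((integrable_eulerDiv hC1 hcompact).const_mul _),
    integral_sub hgrad hdensity, integral_const_mul, integral_const_mul,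
    integral_eulerDiv hC1 hcompact, mul_zero, sub_zero, hardyDeficit]

lemma hardyDeficit_nonneg (hp : 1 < p) (hu : ContDiff ℝ 1 u)
    (hc : HasCompactSupport u) (h0 : (0 : E) ∉ tsupport u) : 0 ≤ hardyDeficit μ p u := by
  rw [← integral_hardyDeficitDensity hp hu hc h0]
  refine integral_nonneg fun x => ?_
  by_cases hx : x ∈ tsupport u
  · exact hardyDeficitDensity_nonneg hp (ne_of_mem_of_not_mem hx h0)
      (hu.differentiable one_ne_zero x)
  · exact (hardyDeficitDensity_of_notMem_tsupport (by positivity) hx).ge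

lemma exists_integral_hardyDensity_mul_deriv_le (hp : 1 < p) (hpn : p ≠ finrank ℝ E)
    (μ : Measure E) [μ.IsAddHaarMeasure] :
    ∃ K : ℝ, 0 < K ∧ ∀ {u : E → ℝ} {g : ℝ → ℝ} {N : ℝ}, ContDiff ℝ 1 u → HasCompactSupport u →
      (0 : E) ∉ tsupport u → (∀ x ∈ tsupport u, IsHardyWeightAt g N ‖x‖) →
      Integrable (fun x => hardyDensity p u x * (‖x‖ * deriv g ‖x‖)) μ ∧
      ∫ x, hardyDensity p u x * (‖x‖ * deriv g ‖x‖) ∂μ ≤ K * N * hardyDeficit μ p u := by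
  obtain ⟨K, hK, hpointwise⟩ := exists_hardyDensity_mul_deriv_le (E := E) hp hpn
  refine ⟨K, hK, fun {u g N} hu hc h0 hg => ?_⟩
  have hp0 : p ≠ 0 := by positivity
  let f : E → ℝ := fun x => hardyDensity p u x * g ‖x‖
  have hf : ContDiff ℝ 1 f :=
    contDiff_hardyDensity_mul_comp_norm hp hu h0 fun x hx => (hg x hx).contDiffAt
  have hfc : HasCompactSupport f := (hasCompactSupport_hardyDensity hp0 hc).mul_right
  have hsupp : tsupport f ⊆ tsupport u :=
    tsupport_mul_subset_left.trans (tsupport_hardyDensity_subset hp0)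
  have hbound x : hardyDensity p u x * (‖x‖ * deriv g ‖x‖) ≤
      2 * eulerDiv f x + K * N * hardyDeficitDensity p u x := by
    by_cases hx : x ∈ tsupport u
    · exact hpointwise (ne_of_mem_of_not_mem hx h0) hu h0 (hg x hx)
    · rw [hardyDensity_of_notMem_tsupport hp0 hx, hardyDeficitDensity_of_notMem_tsupport hp0 hx,
        eulerDiv_of_notMem_tsupport fun h => hx (hsupp h)]
      simp
  have heuler : Integrable (fun x => 2 * eulerDiv f x) μ := (integrable_eulerDiv hf hfc).const_mul 2
  have hdeficit : Integrable (fun x => K * N * hardyDeficitDensity p u x) μ :=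
    (integrable_hardyDeficitDensity hp hu hc h0).const_mul _
  have hmeas : Measurable fun x => hardyDensity p u x * (‖x‖ * deriv g ‖x‖) :=
    (contDiff_hardyDensity hp hu h0).continuous.measurable.mul
      (measurable_norm.mul ((measurable_deriv g).comp measurable_norm))
  have hint : Integrable (fun x => hardyDensity p u x * (‖x‖ * deriv g ‖x‖)) μ :=
    (heuler.add hdeficit).mono' hmeas.aestronglyMeasurable <| .of_forall fun x =>
      (Real.norm_of_nonneg (hardyDensity_mul_deriv_nonneg hp0 (hg x))).trans_le (hbound x)
  refine ⟨hint, ?_⟩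
  calc ∫ x, hardyDensity p u x * (‖x‖ * deriv g ‖x‖) ∂μ
      ≤ ∫ x, (2 * eulerDiv f x + K * N * hardyDeficitDensity p u x) ∂μ :=
        integral_mono hint (heuler.add hdeficit) hbound
    _ = K * N * hardyDeficit μ p u := by
        rw [integral_add heuler hdeficit, integral_const_mul, integral_const_mul,
          integral_eulerDiv hf hfc, integral_hardyDeficitDensity hp hu hc h0, mul_zero, zero_add]

end WeightedHardy

/-! ## A logarithmic weight -/

section LogWeight

variable {β r D t : ℝ}

/-- The reciprocal of the radial weight `logWeight`. -/
noncomputable def logWeightInv (β r D t : ℝ) : ℝ :=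
  (r / t) ^ β + (1 + Real.log (D / t)) / (1 + Real.log (D / r))

/-- A radial weight on `(0, D]` that grows like `(t / r) ^ β` for `t ≤ r` and like the logarithmic
weight `(1 + log (D / r)) / (1 + log (D / t))` for `t ≥ r`. -/
noncomputable def logWeight (β r D t : ℝ) : ℝ :=
  (logWeightInv β r D t)⁻¹

lemma one_le_one_add_log_div (ht : 0 < t) (htD : t ≤ D) : 1 ≤ 1 + Real.log (D / t) :=
  le_add_of_nonneg_right (Real.log_nonneg ((one_le_div ht).2 htD))

lemma hasDerivAt_logWeightInv (hr : 0 < r) (hrD : r ≤ D) (ht : 0 < t) :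
    HasDerivAt (logWeightInv β r D)
      (-(β * (r / t) ^ β + (1 + Real.log (D / r))⁻¹) / t) t := by
  have hD : 0 < D := hr.trans_le hrD
  have hrt : r / t ≠ 0 := by positivity
  have hdiv (a : ℝ) : HasDerivAt (fun s => a / s) (-(a / t) / t) t := by
    convert! (hasDerivAt_inv ht.ne').const_mul a using 1
    field_simp
  convert! ((hdiv r).rpow_const (p := β) (Or.inl hrt)).add
    ((((hdiv D).log (by positivity)).const_add 1).div_const (1 + Real.log (D / r))) using 1
  rw [Real.rpow_sub_one hrt]
  field_simp
  ring

lemma contDiffAt_logWeightInv (hr : 0 < r) (hrD : r ≤ D) (ht : 0 < t) :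
    ContDiffAt ℝ 1 (logWeightInv β r D) t := by
  have hD : 0 < D := hr.trans_le hrD
  have hdiv (a : ℝ) : ContDiffAt ℝ 1 (fun s => a / s) t :=
    contDiffAt_const.div contDiffAt_id ht.ne'
  exact ((hdiv r).rpow_const_of_ne (by positivity)).add
    ((contDiffAt_const.add ((hdiv D).log (by positivity))).div_const _)

lemma add_inv_le_logWeightInv (hβ1 : β ≤ 1) (hr : 0 < r) (hrD : r ≤ D) (ht : 0 < t)
    (htD : t ≤ D) :
    β * (r / t) ^ β + (1 + Real.log (D / r))⁻¹ ≤ logWeightInv β r D t := by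
  have hN := one_le_one_add_log_div hr hrD
  rw [logWeightInv, ← one_div]
  gcongr
  · exact mul_le_of_le_one_left (by positivity) hβ1
  · exact one_le_one_add_log_div ht htD

lemma logWeightInv_pos (hr : 0 < r) (hrD : r ≤ D) (ht : 0 < t) (htD : t ≤ D) :
    0 < logWeightInv β r D t := by
  have hN := one_le_one_add_log_div hr hrD
  have ht' := one_le_one_add_log_div ht htD
  unfold logWeightInv
  positivity

lemma mul_deriv_logWeight (hr : 0 < r) (hrD : r ≤ D) (ht : 0 < t) (htD : t ≤ D) :
    t * deriv (logWeight β r D) t =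
      (β * (r / t) ^ β + (1 + Real.log (D / r))⁻¹) / logWeightInv β r D t ^ 2 := by
  have hderiv : deriv (logWeight β r D) t = _ :=
    ((hasDerivAt_logWeightInv hr hrD ht).inv (logWeightInv_pos hr hrD ht htD).ne').deriv
  rw [hderiv]
  field_simp

lemma isHardyWeightAt_logWeight (hβ : 0 ≤ β) (hβ1 : β ≤ 1) (hr : 0 < r) (hrD : r ≤ D)
    (ht : 0 < t) (htD : t ≤ D) :
    IsHardyWeightAt (logWeight β r D) (1 + Real.log (D / r)) t := by
  have hinv : 0 < logWeightInv β r D t := logWeightInv_pos hr hrD ht htD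
  have hN : 0 < 1 + Real.log (D / r) := by linarith [one_le_one_add_log_div hr hrD]
  refine ⟨(contDiffAt_logWeightInv hr hrD ht).inv hinv.ne', inv_pos.2 hinv, ?_, ?_, ?_⟩ <;>
    rw [mul_deriv_logWeight hr hrD ht htD]
  · positivity
  · calc (β * (r / t) ^ β + (1 + Real.log (D / r))⁻¹) / logWeightInv β r D t ^ 2
        ≤ logWeightInv β r D t / logWeightInv β r D t ^ 2 := by
          gcongr
          exact add_inv_le_logWeightInv hβ1 hr hrD ht htD
      _ = logWeight β r D t := by
          rw [logWeight]
          field_simp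
  · calc logWeight β r D t ^ 2
        = (1 + Real.log (D / r)) * (0 + (1 + Real.log (D / r))⁻¹) / logWeightInv β r D t ^ 2 := by
          rw [logWeight]
          field_simp
          ring
      _ ≤ (1 + Real.log (D / r)) * (β * (r / t) ^ β + (1 + Real.log (D / r))⁻¹) /
            logWeightInv β r D t ^ 2 := by
          gcongr
          positivity
      _ = _ := mul_div_assoc ..

lemma one_le_two_mul_div_rpow (hβ : 0 ≤ β) (hβ1 : β ≤ 1) (ht : 0 < t) (htr : t ≤ 2 * r) :
    1 ≤ 2 * (r / t) ^ β := by
  have hhalf : 1 / 2 ≤ r / t := by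
    rw [div_le_div_iff₀ two_pos ht]
    linarith
  calc (1 : ℝ) = 2 * (1 / 2) ^ (1 : ℝ) := by norm_num
    _ ≤ 2 * (1 / 2) ^ β := by
        gcongr 2 * ?_
        exact Real.rpow_le_rpow_of_exponent_ge (by norm_num) (by norm_num) hβ1
    _ ≤ 2 * (r / t) ^ β := by gcongr

lemma logWeightInv_le_mul_rpow (hβ : 0 < β) (hβ1 : β ≤ 1) (hr : 0 < r) (hrD : r ≤ D)
    (ht : 0 < t) (htr : t ≤ 2 * r) :
    logWeightInv β r D t ≤ (3 + 1 / β) * (r / t) ^ β := by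
  have hD : 0 < D := hr.trans_le hrD
  have hN := one_le_one_add_log_div hr hrD
  have hN0 : 0 < 1 + Real.log (D / r) := by linarith
  have hlog : Real.log (r / t) / (1 + Real.log (D / r)) ≤ (r / t) ^ β / β := by
    rw [div_le_iff₀ hN0]
    exact (Real.log_le_rpow_div (by positivity) hβ).trans
      (le_mul_of_one_le_right (by positivity) hN)
  have hsplit : Real.log (D / t) = Real.log (D / r) + Real.log (r / t) := by
    rw [← Real.log_mul (by positivity) (by positivity)]
    congr 1
    field_simp
  calc logWeightInv β r D t
      = (r / t) ^ β + 1 + Real.log (r / t) / (1 + Real.log (D / r)) := by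
        rw [logWeightInv, hsplit, ← add_assoc, add_div, div_self hN0.ne', ← add_assoc]
    _ ≤ (r / t) ^ β + 2 * (r / t) ^ β + (r / t) ^ β / β := by
        gcongr
        exact one_le_two_mul_div_rpow hβ.le hβ1 ht htr
    _ = (3 + 1 / β) * (r / t) ^ β := by ring

lemma div_rpow_le_mul_deriv_logWeight (hβ : 0 < β) (hβ1 : β ≤ 1) (hr : 0 < r) (hrD : r ≤ D)
    (ht : 0 < t) (htD : t ≤ D) (htr : t ≤ 2 * r) :
    (t / r) ^ β ≤ (3 + 1 / β) ^ 2 / β * (t * deriv (logWeight β r D) t) := by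
  have hinv : 0 < logWeightInv β r D t := logWeightInv_pos hr hrD ht htD
  have hN : 0 < 1 + Real.log (D / r) := by linarith [one_le_one_add_log_div hr hrD]
  have hrpow : (t / r) ^ β = ((r / t) ^ β)⁻¹ := by
    rw [← inv_div, Real.inv_rpow (by positivity)]
  calc (t / r) ^ β = (3 + 1 / β) ^ 2 / β * (β * (r / t) ^ β / ((3 + 1 / β) * (r / t) ^ β) ^ 2) := by
        rw [hrpow]
        field_simp
    _ ≤ (3 + 1 / β) ^ 2 / β * ((β * (r / t) ^ β + (1 + Real.log (D / r))⁻¹) /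
          logWeightInv β r D t ^ 2) := by
        gcongr
        · exact le_add_of_nonneg_right (by positivity)
        · exact logWeightInv_le_mul_rpow hβ hβ1 hr hrD ht htr
    _ = (3 + 1 / β) ^ 2 / β * (t * deriv (logWeight β r D) t) := by
        rw [mul_deriv_logWeight hr hrD ht htD]

end LogWeight

/-! ## Hölder's inequality with a weight vanishing at the origin -/

section Holder

variable {α : Type*} [MeasurableSpace α] {ν : Measure α}

lemma memLp_rpow_of_integrable {f : α → ℝ} {s : ℝ} (hs : 0 < s) (hf0 : 0 ≤ f)
    (hf : Integrable f ν) : MemLp (fun x => f x ^ s) (ENNReal.ofReal s⁻¹) ν := by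
  have hmem := (memLp_one_iff_integrable.2 hf).norm_rpow_div (ENNReal.ofReal s)
  simpa only [Real.norm_of_nonneg (hf0 _), ENNReal.toReal_ofReal hs.le, one_div,
    ← ENNReal.ofReal_inv_of_pos hs] using hmem

lemma integral_rpow_le_of_weight {p q : ℝ} (hq : 0 < q) (hqp : q < p) {f w : α → ℝ}
    (hf0 : 0 ≤ f) (hw0 : 0 ≤ w) (hfw : ∀ x, w x = 0 → f x = 0)
    (hf : Integrable (fun x => f x ^ p * w x) ν)
    (hw : Integrable (fun x => w x ^ (-(q / (p - q)))) ν) :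
    ∫ x, f x ^ q ∂ν ≤
      (∫ x, f x ^ p * w x ∂ν) ^ (q / p) * (∫ x, w x ^ (-(q / (p - q))) ∂ν) ^ ((p - q) / p) := by
  have hp : 0 < p := hq.trans hqp
  have hpq : 0 < p - q := sub_pos.2 hqp
  have hfw0 : 0 ≤ fun x => f x ^ p * w x :=
    fun x => mul_nonneg (Real.rpow_nonneg (hf0 x) p) (hw0 x)
  have hwinv0 : 0 ≤ fun x => w x ^ (-(q / (p - q))) := fun x => Real.rpow_nonneg (hw0 x) _
  have hconj : (p / q).HolderConjugate (p / (p - q)) := by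
    refine Real.holderConjugate_iff.2 ⟨(one_lt_div hq).2 hqp, ?_⟩
    field_simp
    ring
  have hfactor x : f x ^ q = (f x ^ p * w x) ^ (q / p) *
      (w x ^ (-(q / (p - q)))) ^ ((p - q) / p) := by
    rcases eq_or_ne (w x) 0 with hx | hx
    · simp [hfw x hx, hx, hq.ne', hp.ne']
    · have hx0 : 0 < w x := (hw0 x).lt_of_ne' hx
      rw [Real.mul_rpow (Real.rpow_nonneg (hf0 x) p) hx0.le, ← Real.rpow_mul (hf0 x),
        ← Real.rpow_mul hx0.le, mul_assoc, ← Real.rpow_add hx0]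
      field_simp
      simp
  calc ∫ x, f x ^ q ∂ν
      = ∫ x, (f x ^ p * w x) ^ (q / p) * (w x ^ (-(q / (p - q)))) ^ ((p - q) / p) ∂ν := by
        simp only [hfactor]
    _ ≤ _ := integral_mul_le_Lp_mul_Lq_of_nonneg hconj
        (.of_forall fun x => Real.rpow_nonneg (hfw0 x) _)
        (.of_forall fun x => Real.rpow_nonneg (hwinv0 x) _)
        (by simpa only [inv_div] using memLp_rpow_of_integrable (div_pos hq hp) hfw0 hf)
        (by simpa only [inv_div] using memLp_rpow_of_integrable (div_pos hpq hp) hwinv0 hw)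
    _ = _ := by
        have hcancel₁ x : ((f x ^ p * w x) ^ (q / p)) ^ (p / q) = f x ^ p * w x := by
          rw [← inv_div p q, Real.rpow_inv_rpow (hfw0 x) (by positivity)]
        have hcancel₂ x : ((w x ^ (-(q / (p - q)))) ^ ((p - q) / p)) ^ (p / (p - q)) =
            w x ^ (-(q / (p - q))) := by
          rw [← inv_div p (p - q), Real.rpow_inv_rpow (hwinv0 x) (by positivity)]
        simp only [hcancel₁, hcancel₂, one_div_div]

end Holder

section SingularIntegral

variable {E : Type*} [NormedAddCommGroup E] [NormedSpace ℝ E] [FiniteDimensional ℝ E]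
  [MeasurableSpace E] [BorelSpace E] {μ : Measure E} [μ.IsAddHaarMeasure]

lemma integrableOn_ball_norm_div_rpow_neg [Nontrivial E] {γ r R : ℝ} (hγ : γ < finrank ℝ E)
    (hr : 0 < r) :
    IntegrableOn (fun x : E => (‖x‖ / r) ^ (-γ)) (ball 0 R) μ := by
  refine integrableOn_ball_of_norm_le_rpow (C := r ^ γ) Module.finrank_pos hγ
    (.of_forall fun x => ?_) (Measurable.aestronglyMeasurable (by fun_prop))
  rw [Real.norm_of_nonneg (by positivity), Real.div_rpow (norm_nonneg _) hr.le,
    Real.rpow_neg hr.le, div_inv_eq_mul, mul_comm]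

lemma setIntegral_ball_comp_norm_div {r : ℝ} (hr : 0 < r) (f : ℝ → ℝ) (R : ℝ) :
    ∫ x in ball (0 : E) (r * R), f (‖x‖ / r) ∂μ =
      r ^ finrank ℝ E * ∫ x in ball (0 : E) R, f ‖x‖ ∂μ := by
  have hscale := Measure.setIntegral_comp_smul_of_pos μ (fun x : E => f (‖x‖ / r)) (ball 0 R) hr
  have hnorm (x : E) : ‖r • x‖ / r = ‖x‖ := by
    rw [norm_smul, Real.norm_of_nonneg hr.le, mul_div_cancel_left₀ _ hr.ne']
  simp only [hnorm, _root_.smul_ball hr.ne', smul_zero, Real.norm_of_nonneg hr.le,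
    smul_eq_mul] at hscale
  rw [hscale, mul_inv_cancel_left₀ (by positivity)]

end SingularIntegral

/-! ## The local improvement -/

section LocalImprovement

variable {E : Type*} [NormedAddCommGroup E] [InnerProductSpace ℝ E] [MeasurableSpace E]
  [BorelSpace E] {p q : ℝ}

lemma integrable_hardyDensity_mul_norm_div_rpow {μ : Measure E} [μ.IsAddHaarMeasure]
    (hp : 1 < p) {β : ℝ} (hβ : 0 ≤ β) {u : E → ℝ} (hu : ContDiff ℝ 1 u)
    (hc : HasCompactSupport u) (h0 : (0 : E) ∉ tsupport u) (r : ℝ) :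
    Integrable (fun x => hardyDensity p u x * (‖x‖ / r) ^ β) μ :=
  ((contDiff_hardyDensity hp hu h0).continuous.mul
    ((continuous_norm.div_const r).rpow_const fun _ => Or.inr hβ)).integrable_of_hasCompactSupport
    (hasCompactSupport_hardyDensity (by positivity) hc).mul_right

variable [FiniteDimensional ℝ E]

lemma exists_setIntegral_hardyDensity_mul_rpow_le (hp : 1 < p) (hpn : p ≠ finrank ℝ E) {β : ℝ}
    (hβ : 0 < β) (hβ1 : β ≤ 1) (μ : Measure E) [μ.IsAddHaarMeasure] :
    ∃ K : ℝ, 0 < K ∧ ∀ {u : E → ℝ} {r D : ℝ}, ContDiff ℝ 1 u → (0 : E) ∉ tsupport u →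
      tsupport u ⊆ closedBall 0 D → 0 < r → r ≤ D →
      ∫ x in ball 0 (r * 2), hardyDensity p u x * (‖x‖ / r) ^ β ∂μ ≤
        K * ((1 + Real.log (D / r)) * hardyDeficit μ p u) := by
  obtain ⟨K, hK, hweighted⟩ := exists_integral_hardyDensity_mul_deriv_le hp hpn μ
  have hp0 : p ≠ 0 := by positivity
  let L := (3 + 1 / β) ^ 2 / β
  refine ⟨L * K, by positivity, fun {u r D} hu h0 hD hr hrD => ?_⟩
  have hc : HasCompactSupport u := .of_support_subset_isCompact (isCompact_closedBall 0 D)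
    ((subset_tsupport u).trans hD)
  have hnorm {x : E} (hx : x ∈ tsupport u) : 0 < ‖x‖ ∧ ‖x‖ ≤ D :=
    ⟨norm_pos_iff.2 (ne_of_mem_of_not_mem hx h0), mem_closedBall_zero_iff.1 (hD hx)⟩
  have hweight x (hx : x ∈ tsupport u) :
      IsHardyWeightAt (logWeight β r D) (1 + Real.log (D / r)) ‖x‖ :=
    isHardyWeightAt_logWeight hβ.le hβ1 hr hrD (hnorm hx).1 (hnorm hx).2
  obtain ⟨hint, hle⟩ := hweighted hu hc h0 hweight
  have hbound x (hxr : x ∈ ball (0 : E) (r * 2)) : hardyDensity p u x * (‖x‖ / r) ^ β ≤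
      L * (hardyDensity p u x * (‖x‖ * deriv (logWeight β r D) ‖x‖)) := by
    by_cases hx : x ∈ tsupport u
    · rw [mul_left_comm]
      refine mul_le_mul_of_nonneg_left ?_ hardyDensity_nonneg
      exact div_rpow_le_mul_deriv_logWeight hβ hβ1 hr hrD (hnorm hx).1 (hnorm hx).2
        (by linarith [mem_ball_zero_iff.1 hxr])
    · simp [hardyDensity_of_notMem_tsupport hp0 hx]
  calc ∫ x in ball 0 (r * 2), hardyDensity p u x * (‖x‖ / r) ^ β ∂μ
      ≤ ∫ x in ball 0 (r * 2),
          L * (hardyDensity p u x * (‖x‖ * deriv (logWeight β r D) ‖x‖)) ∂μ :=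
        setIntegral_mono_on
          (integrable_hardyDensity_mul_norm_div_rpow hp hβ.le hu hc h0 r).integrableOn
          (hint.const_mul L).integrableOn measurableSet_ball hbound
    _ ≤ ∫ x, L * (hardyDensity p u x * (‖x‖ * deriv (logWeight β r D) ‖x‖)) ∂μ :=
        setIntegral_le_integral (hint.const_mul L)
          (.of_forall fun x => mul_nonneg (by positivity)
            (hardyDensity_mul_deriv_nonneg hp0 (hweight x)))
    _ ≤ L * (K * (1 + Real.log (D / r)) * hardyDeficit μ p u) := by
        rw [integral_const_mul]
        gcongr
    _ = L * K * ((1 + Real.log (D / r)) * hardyDeficit μ p u) := by ring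

lemma exists_mul_div_sub_lt_one (hq : 0 < q) (hqp : q < p) :
    ∃ β : ℝ, 0 < β ∧ β ≤ 1 ∧ β * (q / (p - q)) < 1 := by
  have hp : 0 < p := hq.trans hqp
  have hpq : 0 < p - q := sub_pos.2 hqp
  refine ⟨(p - q) / p, by positivity, (div_le_one hp).2 (by linarith), ?_⟩
  rw [div_mul_div_cancel₀' hpq.ne']
  exact (div_lt_one hp).2 hqp

lemma setIntegral_hardyDensity_le_of_subset_ball [Nontrivial E] {μ : Measure E}
    [μ.IsAddHaarMeasure] (hq : 0 < q) (hqp : q < p) {β r R : ℝ} (hβ : 0 < β)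
    (hβq : β * (q / (p - q)) < finrank ℝ E) (hr : 0 < r) {s : Set E} (hs : s ⊆ ball 0 (r * R))
    {u : E → ℝ} (hint : Integrable (fun x => hardyDensity p u x * (‖x‖ / r) ^ β) μ) :
    ∫ x in s, hardyDensity q u x ∂μ ≤
      (∫ x in ball 0 (r * R), hardyDensity p u x * (‖x‖ / r) ^ β ∂μ) ^ (q / p) *
        (r ^ finrank ℝ E * ∫ x in ball (0 : E) R, ‖x‖ ^ (-(β * (q / (p - q)))) ∂μ) ^
          ((p - q) / p) := by
  have hp : 0 < p := hq.trans hqp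
  have hpq : 0 < p - q := sub_pos.2 hqp
  have hpow (a : ℝ) x : (|u x| / ‖x‖) ^ a = hardyDensity a u x :=
    Real.div_rpow (abs_nonneg _) (norm_nonneg _) a
  have hpow_weight (x : E) :
      ((‖x‖ / r) ^ β) ^ (-(q / (p - q))) = (‖x‖ / r) ^ (-(β * (q / (p - q)))) := by
    rw [← Real.rpow_mul (by positivity), mul_neg]
  have hint_singular :
      IntegrableOn (fun x : E => (‖x‖ / r) ^ (-(β * (q / (p - q))))) (ball 0 (r * R)) μ :=
    integrableOn_ball_norm_div_rpow_neg hβq hr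
  have hzero (x : E) (hx : (‖x‖ / r) ^ β = 0) : |u x| / ‖x‖ = 0 := by
    have : ‖x‖ = 0 := by
      simpa [hr.ne'] using ((Real.rpow_eq_zero (by positivity) hβ.ne').1 hx)
    simp [this]
  have holder := integral_rpow_le_of_weight (ν := μ.restrict s) hq hqp
    (f := fun x => |u x| / ‖x‖) (w := fun x => (‖x‖ / r) ^ β)
    (fun x => by positivity) (fun x => by positivity) hzero
    (by simpa only [hpow] using hint.restrict)
    (by simpa only [hpow_weight] using (hint_singular.mono_set hs).integrable)
  simp only [hpow, hpow_weight] at holder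
  rw [← setIntegral_ball_comp_norm_div hr (· ^ (-(β * (q / (p - q)))))]
  have hdensity x : 0 ≤ hardyDensity p u x * (‖x‖ / r) ^ β :=
    mul_nonneg hardyDensity_nonneg (by positivity)
  have hmono₁ := setIntegral_mono_set hint.integrableOn (.of_forall hdensity) hs.eventuallyLE
  have hmono₂ := setIntegral_mono_set hint_singular (.of_forall fun x => by positivity)
    hs.eventuallyLE
  have hsingular (t : Set E) : 0 ≤ ∫ x in t, (‖x‖ / r) ^ (-(β * (q / (p - q)))) ∂μ :=
    integral_nonneg fun x => by positivity
  exact holder.trans <| mul_le_mul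
    (Real.rpow_le_rpow (integral_nonneg hdensity) hmono₁ (by positivity))
    (Real.rpow_le_rpow (hsingular s) hmono₂ (div_nonneg hpq.le hp.le))
    (Real.rpow_nonneg (hsingular s) _) (Real.rpow_nonneg (integral_nonneg hdensity) _)

lemma exists_setIntegral_hardyDensity_le [Nontrivial E] (hp : 1 < p) (hpn : p ≠ finrank ℝ E)
    (hq : 0 < q) (hqp : q < p) (μ : Measure E) [μ.IsAddHaarMeasure] :
    ∃ K : ℝ, 0 < K ∧ ∀ {u : E → ℝ} {c : E} {r D : ℝ}, ContDiff ℝ 1 u → (0 : E) ∉ tsupport u →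
      tsupport u ⊆ closedBall 0 D → 0 < r → r ≤ D → 0 ∈ closedBall c r →
      ∫ x in ball c r, hardyDensity q u x ∂μ ≤
        K * ((1 + Real.log (D / r)) * hardyDeficit μ p u) ^ (q / p) *
          (r ^ finrank ℝ E) ^ ((p - q) / p) := by
  obtain ⟨β, hβ, hβ1, hβq⟩ := exists_mul_div_sub_lt_one hq hqp
  obtain ⟨K, hK, hweighted⟩ := exists_setIntegral_hardyDensity_mul_rpow_le hp hpn hβ hβ1 μ
  have hfinrank : (1 : ℝ) ≤ finrank ℝ E := by exact_mod_cast Module.finrank_pos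
  set A := ∫ x in ball (0 : E) 2, ‖x‖ ^ (-(β * (q / (p - q)))) ∂μ
  have hA : 0 ≤ A := integral_nonneg fun x => by positivity
  refine ⟨K ^ (q / p) * (1 + A) ^ ((p - q) / p), by positivity,
    fun {u c r D} hu h0 hD hr hrD h0c => ?_⟩
  have hc : HasCompactSupport u := .of_support_subset_isCompact (isCompact_closedBall 0 D)
    ((subset_tsupport u).trans hD)
  have hball : ball c r ⊆ ball (0 : E) (r * 2) :=
    ball_subset_ball' (by linarith [mem_closedBall'.1 h0c])
  have hN : 0 < 1 + Real.log (D / r) := by linarith [one_le_one_add_log_div hr hrD]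
  have hdeficit : 0 ≤ hardyDeficit μ p u := hardyDeficit_nonneg hp hu hc h0
  calc ∫ x in ball c r, hardyDensity q u x ∂μ
      ≤ (∫ x in ball 0 (r * 2), hardyDensity p u x * (‖x‖ / r) ^ β ∂μ) ^ (q / p) *
          (r ^ finrank ℝ E * A) ^ ((p - q) / p) :=
        setIntegral_hardyDensity_le_of_subset_ball hq hqp hβ (hβq.trans_le hfinrank) hr hball
          (integrable_hardyDensity_mul_norm_div_rpow hp hβ.le hu hc h0 r)
    _ ≤ (K * ((1 + Real.log (D / r)) * hardyDeficit μ p u)) ^ (q / p) *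
          (r ^ finrank ℝ E * (1 + A)) ^ ((p - q) / p) := by
        gcongr
        · exact integral_nonneg fun x => mul_nonneg hardyDensity_nonneg (by positivity)
        · exact hweighted hu h0 hD hr hrD
        · exact le_add_of_nonneg_left zero_le_one
    _ = K ^ (q / p) * (1 + A) ^ ((p - q) / p) *
          ((1 + Real.log (D / r)) * hardyDeficit μ p u) ^ (q / p) *
          (r ^ finrank ℝ E) ^ ((p - q) / p) := by
        rw [Real.mul_rpow hK.le (by positivity),
          Real.mul_rpow (x := r ^ finrank ℝ E) (by positivity) (by positivity)]
        ring

lemma rpow_mul_mean_rpow_le {K N I ρ ω a : ℝ} (hq : 0 < q) (hqp : q < p) (hK : 0 ≤ K)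
    (hN : 0 < N) (hI : 0 ≤ I) (hρ : 0 < ρ) (hω : 0 < ω) (ha0 : 0 ≤ a)
    (ha : a ≤ K * (N * I) ^ (q / p) * ρ ^ ((p - q) / p)) :
    ρ ^ (1 / p) * N⁻¹ ^ (1 / p) * (1 / (ω * ρ) * a) ^ (1 / q) ≤
      (K / ω) ^ (1 / q) * I ^ (1 / p) := by
  have hp : 0 < p := hq.trans hqp
  have hmean : 1 / (ω * ρ) * a ≤ K / ω * (N * I / ρ) ^ (q / p) := by
    have hρ_rpow : ρ ^ ((p - q) / p) = ρ / ρ ^ (q / p) := by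
      rw [sub_div, div_self hp.ne', Real.rpow_sub hρ, Real.rpow_one]
    calc 1 / (ω * ρ) * a ≤ 1 / (ω * ρ) * (K * (N * I) ^ (q / p) * ρ ^ ((p - q) / p)) := by gcongr
      _ = K / ω * (N * I / ρ) ^ (q / p) := by
          rw [hρ_rpow, Real.div_rpow (by positivity) hρ.le]
          field_simp
  have hexp : q / p * (1 / q) = 1 / p := by field_simp
  calc ρ ^ (1 / p) * N⁻¹ ^ (1 / p) * (1 / (ω * ρ) * a) ^ (1 / q)
      ≤ ρ ^ (1 / p) * N⁻¹ ^ (1 / p) * (K / ω * (N * I / ρ) ^ (q / p)) ^ (1 / q) := by gcongr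
    _ = (K / ω) ^ (1 / q) * (ρ * N⁻¹ * (N * I / ρ)) ^ (1 / p) := by
        rw [Real.mul_rpow (by positivity) (by positivity), ← Real.rpow_mul (by positivity), hexp,
          Real.mul_rpow (by positivity) (by positivity), Real.mul_rpow hρ.le (by positivity)]
        ring
    _ = (K / ω) ^ (1 / q) * I ^ (1 / p) := by
        congr 2
        field_simp

theorem hardy_local_improvement_ball_origin_general [Nontrivial E] (hp : 1 < p)
    (hpn : p ≠ finrank ℝ E) (hq : 0 < q) (hqp : q < p) (μ : Measure E) [μ.IsAddHaarMeasure] :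
    ∃ C : ℝ, 0 < C ∧ ∀ {u : E → ℝ} {Ω : Set E} {c : E} {r D : ℝ}, ContDiff ℝ 1 u →
      tsupport u ⊆ Ω \ {0} → Ω ⊆ closedBall 0 D → 0 < r → r ≤ D → 0 ∈ closedBall c r →
      r ^ (finrank ℝ E / p) * ((1 - Real.log (r / D))⁻¹) ^ (1 / p) *
        (1 / (μ.real (ball 0 1) * r ^ finrank ℝ E) *
          ∫ x in ball c r, |u x| ^ q / ‖x‖ ^ q ∂μ) ^ (1 / q) ≤
        C * ((∫ x in Ω, ‖fderiv ℝ u x‖ ^ p ∂μ) -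
          |(p - finrank ℝ E) / p| ^ p * ∫ x in Ω, |u x| ^ p / ‖x‖ ^ p ∂μ) ^ (1 / p) := by
  obtain ⟨K, hK, hholder⟩ := exists_setIntegral_hardyDensity_le hp hpn hq hqp μ
  have hω : 0 < μ.real (ball (0 : E) 1) :=
    ENNReal.toReal_pos (measure_ball_pos μ 0 one_pos).ne' measure_ball_lt_top.ne
  refine ⟨(K / μ.real (ball (0 : E) 1)) ^ (1 / q), by positivity,
    fun {u Ω c r D} hu hsupp hΩ hr hrD h0c => ?_⟩
  have hsuppΩ : tsupport u ⊆ Ω := hsupp.trans sdiff_subset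
  have hsuppD : tsupport u ⊆ closedBall 0 D := hsuppΩ.trans hΩ
  have h0 : (0 : E) ∉ tsupport u := fun h => (hsupp h).2 rfl
  have hc : HasCompactSupport u := .of_support_subset_isCompact (isCompact_closedBall 0 D)
    ((subset_tsupport u).trans hsuppD)
  have hlog : 1 - Real.log (r / D) = 1 + Real.log (D / r) := by
    rw [← inv_div, Real.log_inv, sub_neg_eq_add]
  have hr_rpow : r ^ (finrank ℝ E / p) = (r ^ finrank ℝ E) ^ (1 / p) := by
    rw [← Real.rpow_natCast_mul hr.le, mul_one_div]
  rw [← hardyDeficit_eq_setIntegral μ (by positivity) hsuppΩ, hlog, hr_rpow]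
  exact rpow_mul_mean_rpow_le hq hqp hK.le (by linarith [one_le_one_add_log_div hr hrD])
    (hardyDeficit_nonneg hp hu hc h0) (by positivity) hω
    (integral_nonneg fun _ => hardyDensity_nonneg) (hholder hu h0 hsuppD hr hrD h0c)

end LocalImprovement

/-- local logarithmic improvement for balls whose closure contains the origin,
all `p ≠ n`. -/
theorem hardy_local_improvement_ball_origin (n : ℕ) (hn : 2 ≤ n) (p q : ℝ)
    (hp : 1 < p) (hpn : p ≠ (n : ℝ)) (hq1 : 1 ≤ q) (hqp : q < p) :
    ∃ Θ C : ℝ, 0 ≤ Θ ∧ 0 < C ∧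
      ∀ Ω : Set (EuclideanSpace ℝ (Fin n)), IsOpen Ω → IsConnected Ω →
        Bornology.IsBounded Ω → (0 : EuclideanSpace ℝ (Fin n)) ∈ Ω →
        ∀ u : EuclideanSpace ℝ (Fin n) → ℝ, ContDiff ℝ (⊤ : ℕ∞) u →
          HasCompactSupport u → tsupport u ⊆ Ω \ {0} →
          ∀ (c : EuclideanSpace ℝ (Fin n)) (r : ℝ), 0 < r → r < Metric.diam Ω →
            (0 : EuclideanSpace ℝ (Fin n)) ∈ Metric.closedBall c r →
          ∀ D : ℝ, Real.exp Θ * Metric.diam Ω ≤ D →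
            r ^ ((n : ℝ) / p) * ((1 - Real.log (r / D))⁻¹) ^ (1 / p) *
              ((1 / ((volume (Metric.ball (0 : EuclideanSpace ℝ (Fin n)) 1)).toReal * r ^ (n : ℕ))) *
                ∫ x in Metric.ball c r, |u x| ^ q / ‖x‖ ^ q) ^ (1 / q) ≤
              C * ((∫ x in Ω, ‖fderiv ℝ u x‖ ^ p)
                - |(p - n) / p| ^ p * ∫ x in Ω, |u x| ^ p / ‖x‖ ^ p) ^ (1 / p) := by
  have : Nontrivial (EuclideanSpace ℝ (Fin n)) :=
    Module.nontrivial_of_finrank_pos (R := ℝ) (by simpa using (by omega : 0 < n))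
  obtain ⟨C, hC, hle⟩ := hardy_local_improvement_ball_origin_general
    (E := EuclideanSpace ℝ (Fin n)) hp (by simpa using hpn) (by linarith) hqp volume
  refine ⟨0, C, le_rfl, hC, fun Ω _ _ hΩ h0 u hu _ hsupp c r hr hrΩ h0c D hD => ?_⟩
  rw [Real.exp_zero, one_mul] at hD
  have hΩD : Ω ⊆ closedBall 0 D := fun x hx => (dist_le_diam_of_mem hΩ hx h0).trans hD
  simpa [Measure.real] using
    hle (hu.of_le (by exact_mod_cast le_top)) hsupp hΩD hr (hrΩ.le.trans hD) h0c
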